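/- arXiv:2407.13762 — 2 statements merged into one kernel-verified Lean document; each statement's English description precedes it below -/
import Mathlib

section
/- Zero-energy flow with spiral converges to a rotating equally spaced configuration. Fix n ≥ 2, a > 0 and ρ ∈ ℝ. For every θ₀ ∈ 𝒳ₙ the differential equation dθ^j_t/dt = 2φ_a^j(θ_t) + ρ (for all j ∈ {1,…,n} and t ≥ 0) has a unique differentiable solution θ : [0,∞) → 𝒳ₙ with θ(0) = θ₀, and there exist ζ ∈ ℝ and C ≥ 0 such that |θ^j_t − ρt − ζ − (j−1)·2π/n| ≤ C·e^{−(a/4)·n·t} for all t ≥ 0 and all j; i.e., θ_t − ρt·(1,…,1) converges to the equally spaced configuration (ζ, ζ + 2π/n, …, ζ + (n−1)·2π/n) exponentially fast with exponential rate (a/4)·n. -/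
open MeasureTheory Filter Set
open scoped Real Topology ENNReal Classical

noncomputable section

/-- The configuration space `𝒳ₙ` of `n` ordered points on (a lift of) the circle:
`θ¹ < θ² < ⋯ < θⁿ < θ¹ + 2π`. -/
def Xspace (n : ℕ) : Set (Fin n → ℝ) :=
  {x | StrictMono x ∧ ∀ i j : Fin n, x i < x j + 2 * π}

/-- The value `θ^{j+1}`, with the convention `θ^{n+1} = θ¹ + 2π`. -/
def nextVal {n : ℕ} (x : Fin n → ℝ) (j : Fin n) : ℝ :=
  if h : (j : ℕ) + 1 < n then x ⟨(j : ℕ) + 1, h⟩ else x ⟨0, j.pos⟩ + 2 * π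

/-- The gap `θ^{j+1} - θ^j` (with wrap-around convention). -/
def gap {n : ℕ} (x : Fin n → ℝ) (j : Fin n) : ℝ := nextVal x j - x j

/-- The minimal gap `Δ(θ) = min_j (θ^{j+1} - θ^j)`. -/
def minGap {n : ℕ} (x : Fin n → ℝ) : ℝ := ⨅ j : Fin n, gap x j

/-- `d(θ) := max_j |2π/n - (θ^{j+1} - θ^j)|`. -/
def dGap {n : ℕ} (x : Fin n → ℝ) : ℝ := ⨆ j : Fin n, |2 * π / n - gap x j|

/-- `φ^j(θ) = ∑_{k ≠ j} cot((θ^j - θ^k)/2)`. -/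
def phi {n : ℕ} (x : Fin n → ℝ) (j : Fin n) : ℝ :=
  ∑ k ∈ Finset.univ.erase j, Real.cot ((x j - x k) / 2)

/-- `φ_a^j := (a/4) φ^j`. -/
def phiA {n : ℕ} (a : ℝ) (x : Fin n → ℝ) (j : Fin n) : ℝ := a / 4 * phi x j

/-- Absolute continuity of every coordinate of `θ` on `[0, T]`: each component is the
integral of a (locally) integrable function. -/
def AbsCont {n : ℕ} (T : ℝ) (θ : ℝ → Fin n → ℝ) : Prop :=
  ∃ v : ℝ → Fin n → ℝ, (∀ j, IntegrableOn (fun s => v s j) (Icc 0 T)) ∧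
    ∀ t ∈ Icc (0 : ℝ) T, ∀ j, θ t j = θ 0 j + ∫ s in (0 : ℝ)..t, v s j

/-- Truncated multiradial Dirichlet energy `J_T(θ)`. -/
def mEnergy (n : ℕ) (T : ℝ) (θ : ℝ → Fin n → ℝ) : ℝ≥0∞ :=
  if AbsCont T θ then
    ENNReal.ofReal (1 / 2) *
      ∫⁻ s in Ioc (0 : ℝ) T,
        ENNReal.ofReal (∑ j, (deriv (fun t => θ t j) s - 2 * phi (θ s) j) ^ 2)
  else ⊤

/-- Multiradial Dirichlet energy `J(θ) = lim_{T→∞} J_T(θ)`, the supremum of the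
nondecreasing family `J_T(θ)`. -/
def mEnergyInf (n : ℕ) (θ : ℝ → Fin n → ℝ) : ℝ≥0∞ := ⨆ T : ℝ, mEnergy n T θ

/-!
In the half-angles `(θ^j - θ^k) / 2`, each shifted by `0` or `π` into `(0, π)`, the drift `φ` is a
sum of pairwise forces `cot`, odd about `π / 2` and with `cot' ≤ -1` on `(0, π)`.

Convergence and uniqueness: oddness makes the forces cancel in the barycentre and turns
`⟨φ(x) - φ(y), x - y⟩` into a sum over pairs, which `cot' ≤ -1` bounds by `-(n / 2) ‖x - y‖²` when
`x` and `y` have the same barycentre.  Hence two flows with a common barycentre approach each other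
like `exp (-(a / 4) n t)`, in particular any flow and the rotating equally spaced configuration.

Global existence: freeze `cot` outside `[η, π - η]`.  The resulting vector field is bounded and
Lipschitz, so its integral curves are global.  It is also a descending gradient, up to the
rotation, of an energy extending `-∑ log sin`; for `η` small this energy, being bounded by its
initial value, keeps all half-angles in `(η, π - η)`, where nothing has been changed.
-/

/-! ### The cotangent -/

section Cotangent

lemma cot_pi_sub (u : ℝ) : Real.cot (π - u) = -Real.cot u := by
  rw [Real.cot_eq_cos_div_sin, Real.cot_eq_cos_div_sin, Real.cos_pi_sub, Real.sin_pi_sub, neg_div]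

lemma cot_periodic : Function.Periodic Real.cot π := fun u => by
  rw [Real.cot_eq_cos_div_sin, Real.cot_eq_cos_div_sin, Real.cos_add_pi, Real.sin_add_pi,
    neg_div_neg_eq]

lemma hasDerivAt_cot {u : ℝ} (hu : Real.sin u ≠ 0) :
    HasDerivAt Real.cot (-(1 + Real.cot u ^ 2)) u := by
  have h := (Real.hasDerivAt_cos u).div (Real.hasDerivAt_sin u) hu
  rw [funext Real.cot_eq_cos_div_sin]
  convert! h using 1
  field_simp
  ring

lemma antitoneOn_cot_add_id : AntitoneOn (fun u => Real.cot u + u) (Ioo 0 π) := by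
  have hderiv : ∀ u ∈ Ioo 0 π,
      HasDerivAt (fun u => Real.cot u + u) (-(1 + Real.cot u ^ 2) + 1) u :=
    fun u hu => (hasDerivAt_cot (Real.sin_pos_of_mem_Ioo hu).ne').add (hasDerivAt_id u)
  refine antitoneOn_of_hasDerivWithinAt_nonpos (convex_Ioo 0 π)
    (fun u hu => (hderiv u hu).continuousAt.continuousWithinAt)
    (fun u hu => (hderiv u (interior_subset hu)).hasDerivWithinAt) fun u _ => ?_
  linarith [sq_nonneg (Real.cot u)]

lemma antitoneOn_cot : AntitoneOn Real.cot (Ioo 0 π) := fun u hu v hv huv => by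
  linarith [antitoneOn_cot_add_id hu hv huv]

lemma sub_mul_sub_le_neg_sq {g : ℝ → ℝ} {I : Set ℝ} (hg : AntitoneOn (fun u => g u + u) I)
    {u v : ℝ} (hu : u ∈ I) (hv : v ∈ I) : (u - v) * (g u - g v) ≤ -(u - v) ^ 2 := by
  have h := (antivaryOn_id_iff.2 hg).sub_mul_sub_nonpos hu hv
  simp only [id_eq] at h
  linarith

end Cotangent

section PairForces

variable {n : ℕ} {x y : Fin n → ℝ} {g W : ℝ → ℝ} {c ρ : ℝ}

/-! ### Phases of a configuration -/

/-- Half of the angle `θ^j - θ^k`, shifted by `0` or `π` so that all phases lie in `(0, π)` exactly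
when `θ ∈ 𝒳ₙ`; the diagonal value is `π / 2`, a zero of the cotangent. -/
def phase (x : Fin n → ℝ) (j k : Fin n) : ℝ :=
  (x j - x k) / 2 + if k < j then 0 else if j < k then π else π / 2

lemma phase_of_lt {j k : Fin n} (h : k < j) : phase x j k = (x j - x k) / 2 := by
  rw [phase, if_pos h, add_zero]

lemma phase_self (j : Fin n) : phase x j j = π / 2 := by
  rw [phase, if_neg (lt_irrefl j), if_neg (lt_irrefl j), sub_self, zero_div, zero_add]

lemma phase_swap (x : Fin n → ℝ) (j k : Fin n) : phase x k j = π - phase x j k := by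
  unfold phase
  rcases lt_trichotomy j k with h | rfl | h
  · rw [if_pos h, if_neg h.asymm, if_pos h]; ring
  · rw [if_neg (lt_irrefl j), if_neg (lt_irrefl j)]; ring
  · rw [if_neg h.asymm, if_pos h, if_pos h]; ring

lemma phase_sub_phase (x y : Fin n → ℝ) (j k : Fin n) :
    phase x j k - phase y j k = ((x j - y j) - (x k - y k)) / 2 := by
  unfold phase
  ring

lemma mem_Xspace_iff_phase : x ∈ Xspace n ↔ ∀ j k, phase x j k ∈ Ioo 0 π := by
  have hpi := Real.pi_pos
  constructor
  · rintro ⟨hmono, hlt⟩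
    have hphase : ∀ {j k}, k < j → phase x j k ∈ Ioo 0 π := fun {j k} h => by
      rw [phase_of_lt h]
      constructor <;> linarith [hmono h, hlt j k]
    intro j k
    rcases lt_trichotomy j k with h | rfl | h
    · rw [phase_swap]
      exact ⟨by linarith [(hphase h).2], by linarith [(hphase h).1]⟩
    · rw [phase_self]
      constructor <;> linarith
    · exact hphase h
  · intro hphase
    have hmono : StrictMono x := fun k j h => by
      have hpos := (hphase j k).1
      rw [phase_of_lt h] at hpos
      linarith
    refine ⟨hmono, fun i j => ?_⟩
    rcases le_or_gt i j with h | h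
    · linarith [hmono.monotone h]
    · have hlt := (hphase i j).2
      rw [phase_of_lt h] at hlt
      linarith

/-! ### Systems driven by pairwise forces -/

/-- Total force on the `j`-th particle when each particle `k` exerts the force `g (phase x j k)`
on it. -/
def pairForce (g : ℝ → ℝ) (x : Fin n → ℝ) (j : Fin n) : ℝ := ∑ k, g (phase x j k)

/-- The vector field `θ^j ↦ c * pairForce g θ j + ρ`.  For `g = cot` and `c = a / 2` it is the field
`2 φ_a + ρ`. -/
def pairField (g : ℝ → ℝ) (c ρ : ℝ) (x : Fin n → ℝ) (j : Fin n) : ℝ := c * pairForce g x j + ρ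

/-- Total energy when each ordered pair `(j, k)` contributes `W (phase x j k)`. -/
def pairEnergy (W : ℝ → ℝ) (x : Fin n → ℝ) : ℝ := ∑ j, ∑ k, W (phase x j k)

lemma phi_eq_sum (x : Fin n → ℝ) (j : Fin n) : phi x j = ∑ k, Real.cot ((x j - x k) / 2) :=
  Finset.sum_erase _ (by rw [sub_self, zero_div, Real.cot_eq_cos_div_sin, Real.sin_zero, div_zero])

lemma phi_eq_pairForce (x : Fin n → ℝ) (j : Fin n) : phi x j = pairForce Real.cot x j := by
  rw [phi_eq_sum]
  refine Finset.sum_congr rfl fun k _ => ?_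
  rcases lt_trichotomy j k with h | rfl | h
  · rw [phase, if_neg h.asymm, if_pos h, cot_periodic]
  · rw [phase_self, sub_self, zero_div, Real.cot_eq_cos_div_sin, Real.cot_eq_cos_div_sin,
      Real.sin_zero, Real.cos_pi_div_two, div_zero, zero_div]
  · rw [phase_of_lt h]

lemma sum_mul_sum_of_antisymm {ι : Type*} [Fintype ι] {A : ι → ι → ℝ}
    (hA : ∀ j k, A k j = -A j k) (v : ι → ℝ) :
    ∑ j, v j * ∑ k, A j k = 1 / 2 * ∑ j, ∑ k, A j k * (v j - v k) := by
  have hfst : ∑ j, ∑ k, A j k * v j = ∑ j, v j * ∑ k, A j k := by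
    simp only [← Finset.sum_mul, mul_comm]
  have hsnd : ∑ j, ∑ k, A j k * v k = -∑ j, v j * ∑ k, A j k := by
    rw [Finset.sum_comm, ← hfst]
    simp only [← Finset.sum_neg_distrib, ← neg_mul, ← hA]
  simp only [mul_sub, Finset.sum_sub_distrib, hfst, hsnd]
  ring

lemma sum_mul_pairForce (hg : ∀ u, g (π - u) = -g u) (x v : Fin n → ℝ) :
    ∑ j, v j * pairForce g x j = 1 / 2 * ∑ j, ∑ k, g (phase x j k) * (v j - v k) :=
  sum_mul_sum_of_antisymm (A := fun j k => g (phase x j k))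
    (fun j k => by rw [phase_swap, hg]) v

lemma sum_pairForce (hg : ∀ u, g (π - u) = -g u) (x : Fin n → ℝ) : ∑ j, pairForce g x j = 0 := by
  simpa using sum_mul_pairForce hg x 1

lemma sum_pairField (hg : ∀ u, g (π - u) = -g u) (c ρ : ℝ) (x : Fin n → ℝ) :
    ∑ j, pairField g c ρ x j = n * ρ := by
  simp only [pairField, Finset.sum_add_distrib, ← Finset.mul_sum, sum_pairForce hg, mul_zero,
    zero_add, Finset.sum_const, Finset.card_univ, Fintype.card_fin, nsmul_eq_mul]

/-! ### Dissipation of energy -/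

lemma antitoneOn_pairEnergy (hg : ∀ u, g (π - u) = -g u) (hW : ∀ u, HasDerivAt W (-g u) u)
    (hc : 0 ≤ c) {s : Set ℝ} (hs : Convex ℝ s) {θ : ℝ → Fin n → ℝ}
    (hθ : IsIntegralCurveOn θ (fun _ => pairField g c ρ) s) :
    AntitoneOn (fun t => pairEnergy W (θ t)) s := by
  have hphase : ∀ t ∈ s, ∀ j k, HasDerivWithinAt (fun r => phase (θ r) j k)
      ((pairField g c ρ (θ t) j - pairField g c ρ (θ t) k) / 2) s t := fun t ht j k =>
    have hcoord := hasDerivWithinAt_pi.1 (hθ t ht)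
    (((hcoord j).sub (hcoord k)).div_const 2).add_const _
  have henergy : ∀ t ∈ s, HasDerivWithinAt (fun r => pairEnergy W (θ r))
      (-c * ∑ j, pairForce g (θ t) j ^ 2) s t := fun t ht => by
    convert! HasDerivWithinAt.fun_sum (u := Finset.univ) fun j _ =>
      HasDerivWithinAt.fun_sum (u := Finset.univ) fun k _ =>
        (hW (phase (θ t) j k)).comp_hasDerivWithinAt t (hphase t ht j k) using 1
    have hpairs := sum_mul_pairForce hg (θ t) (pairForce g (θ t))
    simp only [sq, hpairs, pairField, Finset.mul_sum]
    refine Finset.sum_congr rfl fun j _ => Finset.sum_congr rfl fun k _ => ?_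
    ring
  refine antitoneOn_of_hasDerivWithinAt_nonpos hs
    (fun t ht => (henergy t ht).continuousWithinAt)
    (fun t ht => (henergy t (interior_subset ht)).mono interior_subset) fun t _ => ?_
  rw [neg_mul, neg_nonpos]
  positivity

lemma le_pairEnergy (hW : ∀ u, 0 ≤ W u) (x : Fin n → ℝ) (j k : Fin n) :
    W (phase x j k) ≤ pairEnergy W x :=
  calc W (phase x j k) ≤ ∑ k, W (phase x j k) :=
        Finset.single_le_sum (f := fun k => W (phase x j k)) (fun _ _ => hW _) (Finset.mem_univ k)
    _ ≤ pairEnergy W x :=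
        Finset.single_le_sum (f := fun j => ∑ k, W (phase x j k))
          (fun _ _ => Finset.sum_nonneg fun _ _ => hW _) (Finset.mem_univ j)

/-! ### Contraction -/

lemma sum_sum_sub_sq {ι : Type*} [Fintype ι] (v : ι → ℝ) :
    ∑ j, ∑ k, (v j - v k) ^ 2 =
      2 * Fintype.card ι * ∑ j, v j ^ 2 - 2 * (∑ j, v j) ^ 2 := by
  simp only [sub_sq, Finset.sum_add_distrib, Finset.sum_sub_distrib, ← Finset.mul_sum,
    ← Finset.sum_mul, Finset.sum_const, Finset.card_univ, nsmul_eq_mul]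
  ring

lemma sum_sub_mul_pairForce_sub_le (hg : ∀ u, g (π - u) = -g u) {I : Set ℝ}
    (hI : AntitoneOn (fun u => g u + u) I) (hx : ∀ j k, phase x j k ∈ I)
    (hy : ∀ j k, phase y j k ∈ I) :
    ∑ j, (x j - y j) * (pairForce g x j - pairForce g y j) ≤
      -(n / 2) * ∑ j, (x j - y j) ^ 2 + 1 / 2 * (∑ j, (x j - y j)) ^ 2 := by
  have hpair : ∀ j k, (g (phase x j k) - g (phase y j k)) * ((x j - y j) - (x k - y k)) ≤
      -(1 / 2) * ((x j - y j) - (x k - y k)) ^ 2 := fun j k => by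
    have h := sub_mul_sub_le_neg_sq hI (hx j k) (hy j k)
    rw [phase_sub_phase] at h
    linarith
  calc ∑ j, (x j - y j) * (pairForce g x j - pairForce g y j)
      = 1 / 2 * ∑ j, ∑ k, (g (phase x j k) - g (phase y j k)) *
          ((x j - y j) - (x k - y k)) := by
        rw [← sum_mul_sum_of_antisymm (A := fun j k => g (phase x j k) - g (phase y j k))
          (fun j k => by rw [phase_swap x, phase_swap y, hg, hg]; ring)]
        simp only [pairForce, Finset.sum_sub_distrib]
    _ ≤ 1 / 2 * ∑ j, ∑ k, -(1 / 2) * ((x j - y j) - (x k - y k)) ^ 2 := by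
        gcongr 1 / 2 * ?_
        exact Finset.sum_le_sum fun j _ => Finset.sum_le_sum fun k _ => hpair j k
    _ = -(n / 2) * ∑ j, (x j - y j) ^ 2 + 1 / 2 * (∑ j, (x j - y j)) ^ 2 := by
        simp only [← Finset.mul_sum]
        rw [sum_sum_sub_sq fun j => x j - y j, Fintype.card_fin]
        ring

lemma inner_toLp_pairField_sub_le (hg : ∀ u, g (π - u) = -g u) {I : Set ℝ}
    (hI : AntitoneOn (fun u => g u + u) I) (hc : 0 ≤ c) (hx : ∀ j k, phase x j k ∈ I)
    (hy : ∀ j k, phase y j k ∈ I) (hsum : ∑ j, x j = ∑ j, y j) :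
    inner ℝ (WithLp.toLp 2 (x - y)) (WithLp.toLp 2 (pairField g c ρ x - pairField g c ρ y)) ≤
      -(c * n / 2) * ‖WithLp.toLp 2 (x - y)‖ ^ 2 :=
  calc inner ℝ (WithLp.toLp 2 (x - y)) (WithLp.toLp 2 (pairField g c ρ x - pairField g c ρ y))
      = c * ∑ j, (x j - y j) * (pairForce g x j - pairForce g y j) := by
        simp only [PiLp.inner_apply, Pi.sub_apply, pairField, Finset.mul_sum,
          RCLike.inner_apply, conj_trivial]
        exact Finset.sum_congr rfl fun j _ => by ring
    _ ≤ c * (-(n / 2) * ∑ j, (x j - y j) ^ 2 + 1 / 2 * (∑ j, (x j - y j)) ^ 2) :=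
        mul_le_mul_of_nonneg_left (sum_sub_mul_pairForce_sub_le hg hI hx hy) hc
    _ = -(c * n / 2) * ‖WithLp.toLp 2 (x - y)‖ ^ 2 := by
        rw [Finset.sum_sub_distrib, hsum, sub_self, EuclideanSpace.real_norm_sq_eq]
        simp only [Pi.sub_apply]
        ring

lemma norm_le_norm_mul_exp_of_inner_deriv_le {E : Type*} [NormedAddCommGroup E]
    [InnerProductSpace ℝ E] {δ δ' : ℝ → E} {κ t₀ : ℝ}
    (hδ : ∀ t ∈ Ici t₀, HasDerivWithinAt δ (δ' t) (Ici t₀) t)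
    (hκ : ∀ t ∈ Ici t₀, inner ℝ (δ t) (δ' t) ≤ -κ * ‖δ t‖ ^ 2) {t : ℝ} (ht : t₀ ≤ t) :
    ‖δ t‖ ≤ ‖δ t₀‖ * Real.exp (-κ * (t - t₀)) := by
  have hsq : ‖δ t‖ ^ 2 ≤ gronwallBound (‖δ t₀‖ ^ 2) (-2 * κ) 0 (t - t₀) :=
    le_gronwallBound_of_liminf_deriv_right_le (f := fun s => ‖δ s‖ ^ 2)
      (f' := fun s => 2 * inner ℝ (δ s) (δ' s))
      (fun s hs => ((hδ s hs.1).norm_sq.mono Icc_subset_Ici_self).continuousWithinAt)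
      (fun s hs r hr => ((hδ s hs.1).norm_sq.mono (Ici_subset_Ici.2 hs.1)).liminf_right_slope_le hr)
      le_rfl (fun s hs => by linarith [hκ s hs.1]) t ⟨ht, le_rfl⟩
  refine (sq_le_sq₀ (norm_nonneg _) (by positivity)).1 ?_
  calc ‖δ t‖ ^ 2 ≤ ‖δ t₀‖ ^ 2 * Real.exp (-2 * κ * (t - t₀)) := by
        rwa [gronwallBound_ε0] at hsq
    _ = (‖δ t₀‖ * Real.exp (-κ * (t - t₀))) ^ 2 := by
        rw [mul_pow, ← Real.exp_nat_mul]
        congr 2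
        push_cast
        ring

lemma sum_eq_of_isIntegralCurveOn_pairField (hg : ∀ u, g (π - u) = -g u) {θ : ℝ → Fin n → ℝ}
    (hθ : IsIntegralCurveOn θ (fun _ => pairField g c ρ) (Ici 0)) {t : ℝ} (ht : 0 ≤ t) :
    ∑ j, θ t j = ∑ j, θ 0 j + n * ρ * t := by
  have hderiv : ∀ s ∈ Ici (0 : ℝ),
      HasDerivWithinAt (fun r => ∑ j, θ r j - n * ρ * r) 0 (Ici 0) s := fun s hs => by
    convert! (HasDerivWithinAt.fun_sum (u := Finset.univ) fun j _ =>
      hasDerivWithinAt_pi.1 (hθ s hs) j).sub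
        ((hasDerivAt_id s).const_mul (n * ρ)).hasDerivWithinAt using 1
    rw [sum_pairField hg, mul_one, sub_self]
  have hconst := constant_of_has_deriv_right_zero
    (fun s hs => ((hderiv s hs.1).mono Icc_subset_Ici_self).continuousWithinAt)
    (fun s hs => (hderiv s hs.1).mono (Ici_subset_Ici.2 hs.1)) t ⟨ht, le_rfl⟩
  linarith

lemma norm_toLp_sub_le_of_isIntegralCurveOn_pairField (hg : ∀ u, g (π - u) = -g u) {I : Set ℝ}
    (hI : AntitoneOn (fun u => g u + u) I) (hc : 0 ≤ c) {θ θ' : ℝ → Fin n → ℝ}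
    (hθ : IsIntegralCurveOn θ (fun _ => pairField g c ρ) (Ici 0))
    (hθ' : IsIntegralCurveOn θ' (fun _ => pairField g c ρ) (Ici 0))
    (hθI : ∀ t ∈ Ici (0 : ℝ), ∀ j k, phase (θ t) j k ∈ I)
    (hθ'I : ∀ t ∈ Ici (0 : ℝ), ∀ j k, phase (θ' t) j k ∈ I)
    (h0 : ∑ j, θ 0 j = ∑ j, θ' 0 j) {t : ℝ} (ht : 0 ≤ t) :
    ‖WithLp.toLp 2 (θ t - θ' t)‖ ≤
      ‖WithLp.toLp 2 (θ 0 - θ' 0)‖ * Real.exp (-(c * n / 2) * t) := by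
  have hderiv : ∀ s ∈ Ici (0 : ℝ), HasDerivWithinAt (fun r => WithLp.toLp 2 (θ r - θ' r))
      (WithLp.toLp 2 (pairField g c ρ (θ s) - pairField g c ρ (θ' s))) (Ici 0) s := fun s hs =>
    (PiLp.hasFDerivAt_toLp (𝕜 := ℝ) 2 _).comp_hasDerivWithinAt s ((hθ s hs).sub (hθ' s hs))
  have hsum : ∀ s ∈ Ici (0 : ℝ), ∑ j, θ s j = ∑ j, θ' s j := fun s hs => by
    rw [sum_eq_of_isIntegralCurveOn_pairField hg hθ hs,
      sum_eq_of_isIntegralCurveOn_pairField hg hθ' hs, h0]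
  have hinner := fun s hs => inner_toLp_pairField_sub_le (ρ := ρ) hg hI hc
    (hθI s hs) (hθ'I s hs) (hsum s hs)
  simpa only [sub_zero] using norm_le_norm_mul_exp_of_inner_deriv_le hderiv hinner ht

end PairForces

/-! ### The spiraling zero-energy flow -/

section SpiralFlow

variable {n : ℕ} {a ρ : ℝ} {θ θ' : ℝ → Fin n → ℝ}

/-- `θ` solves `dθ^j/dt = 2 φ_a^j(θ) + ρ` within `𝒳ₙ` for all times `t ≥ 0`, one-sidedly at
`t = 0`. -/
structure IsSpiralFlow (a ρ : ℝ) (θ : ℝ → Fin n → ℝ) : Prop where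
  mem_Xspace : ∀ t ∈ Ici (0 : ℝ), θ t ∈ Xspace n
  hasDerivWithinAt : ∀ t ∈ Ici (0 : ℝ), ∀ j : Fin n,
    HasDerivWithinAt (fun s => θ s j) (2 * phiA a (θ t) j + ρ) (Ici 0) t

lemma two_mul_phiA_add_eq_pairField (a ρ : ℝ) (x : Fin n → ℝ) (j : Fin n) :
    2 * phiA a x j + ρ = pairField Real.cot (a / 2) ρ x j := by
  rw [phiA, phi_eq_pairForce, pairField]
  ring

lemma isSpiralFlow_iff : IsSpiralFlow a ρ θ ↔
    (∀ t ∈ Ici (0 : ℝ), ∀ j k, phase (θ t) j k ∈ Ioo 0 π) ∧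
      IsIntegralCurveOn θ (fun _ => pairField Real.cot (a / 2) ρ) (Ici 0) := by
  simp only [IsIntegralCurveOn, hasDerivWithinAt_pi, ← two_mul_phiA_add_eq_pairField,
    ← mem_Xspace_iff_phase]
  exact ⟨fun h => ⟨h.1, h.2⟩, fun h => ⟨h.1, h.2⟩⟩

namespace IsSpiralFlow

lemma norm_toLp_sub_le (ha : 0 ≤ a) (hθ : IsSpiralFlow a ρ θ) (hθ' : IsSpiralFlow a ρ θ')
    (h0 : ∑ j, θ 0 j = ∑ j, θ' 0 j) {t : ℝ} (ht : 0 ≤ t) :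
    ‖WithLp.toLp 2 (θ t - θ' t)‖ ≤
      ‖WithLp.toLp 2 (θ 0 - θ' 0)‖ * Real.exp (-(a / 4) * n * t) := by
  obtain ⟨hphase, hcurve⟩ := isSpiralFlow_iff.1 hθ
  obtain ⟨hphase', hcurve'⟩ := isSpiralFlow_iff.1 hθ'
  convert! norm_toLp_sub_le_of_isIntegralCurveOn_pairField cot_pi_sub antitoneOn_cot_add_id
    (by positivity : 0 ≤ a / 2) hcurve hcurve' hphase hphase' h0 ht using 3
  ring

lemma eq_of_zero_eq (ha : 0 ≤ a) (hθ : IsSpiralFlow a ρ θ) (hθ' : IsSpiralFlow a ρ θ')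
    (h0 : θ 0 = θ' 0) {t : ℝ} (ht : 0 ≤ t) : θ t = θ' t := by
  have hle := hθ.norm_toLp_sub_le ha hθ' (by rw [h0]) ht
  rw [h0, sub_self, WithLp.toLp_zero, norm_zero, zero_mul, norm_le_zero_iff,
    WithLp.toLp_eq_zero] at hle
  exact sub_eq_zero.1 hle

end IsSpiralFlow

/-! ### Equally spaced configurations -/

/-- The configuration `(ζ, ζ + 2π/n, …, ζ + (n-1)2π/n)`. -/
def equallySpaced (n : ℕ) (ζ : ℝ) (j : Fin n) : ℝ := ζ + (j : ℕ) * (2 * π / n)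

lemma equallySpaced_mem_Xspace (n : ℕ) (ζ : ℝ) : equallySpaced n ζ ∈ Xspace n := by
  have hstep : ∀ _ : Fin n, 0 < 2 * π / n := fun i =>
    div_pos Real.two_pi_pos (Nat.cast_pos.2 i.pos)
  refine ⟨fun i j hij => ?_, fun i j => ?_⟩
  · exact add_lt_add_right (mul_lt_mul_of_pos_right (Nat.cast_lt.2 hij) (hstep i)) ζ
  · have hi : ((i : ℕ) : ℝ) * (2 * π / n) < 2 * π :=
      calc ((i : ℕ) : ℝ) * (2 * π / n) < n * (2 * π / n) :=
            mul_lt_mul_of_pos_right (Nat.cast_lt.2 i.isLt) (hstep i)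
        _ = 2 * π := mul_div_cancel₀ _ (Nat.cast_ne_zero.2 i.pos.ne')
    have hj : 0 ≤ ((j : ℕ) : ℝ) * (2 * π / n) := by positivity
    unfold equallySpaced
    linarith

lemma cot_equallySpaced_sub_div_two (ζ : ℝ) (j k : Fin n) :
    Real.cot ((equallySpaced n ζ j - equallySpaced n ζ k) / 2) =
      Real.cot (((j - k : Fin n) : ℕ) * (π / n)) := by
  have hn : (n : ℝ) ≠ 0 := Nat.cast_ne_zero.2 j.pos.ne'
  rcases le_or_gt k j with h | h
  · rw [Fin.coe_sub_iff_le.2 h, Nat.cast_sub h]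
    congr 1
    unfold equallySpaced
    ring
  · rw [Fin.coe_sub_iff_lt.2 h, Nat.cast_sub (by omega), ← cot_periodic]
    congr 1
    unfold equallySpaced
    push_cast
    field_simp
    ring

lemma phi_equallySpaced (ζ : ℝ) (j : Fin n) : phi (equallySpaced n ζ) j = 0 := by
  have : NeZero n := ⟨j.pos.ne'⟩
  have hconst : ∀ i, phi (equallySpaced n ζ) i = ∑ m : Fin n, Real.cot ((m : ℕ) * (π / n)) :=
    fun i => by
      simp only [phi_eq_sum, cot_equallySpaced_sub_div_two]
      exact Equiv.sum_comp (Equiv.subLeft i) fun m : Fin n => Real.cot ((m : ℕ) * (π / n))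
  have hsum : ∑ i, phi (equallySpaced n ζ) i = 0 := by
    simp only [phi_eq_pairForce, sum_pairForce cot_pi_sub]
  simp only [hconst, Finset.sum_const, smul_eq_zero, Finset.card_univ, Fintype.card_fin,
    NeZero.ne n, false_or] at hsum
  rw [hconst, hsum]

lemma exists_sum_equallySpaced_eq (hn : n ≠ 0) (s : ℝ) : ∃ ζ, ∑ j, equallySpaced n ζ j = s := by
  have hn' : (n : ℝ) ≠ 0 := Nat.cast_ne_zero.2 hn
  refine ⟨(s - ∑ j : Fin n, ((j : ℕ) : ℝ) * (2 * π / n)) / n, ?_⟩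
  simp only [equallySpaced, Finset.sum_add_distrib, Finset.sum_const, Finset.card_univ,
    Fintype.card_fin, nsmul_eq_mul]
  rw [mul_div_cancel₀ _ hn', sub_add_cancel]

lemma isSpiralFlow_equallySpaced (n : ℕ) (a ρ ζ : ℝ) :
    IsSpiralFlow a ρ fun t => equallySpaced n (ζ + ρ * t) where
  mem_Xspace _ _ := equallySpaced_mem_Xspace n _
  hasDerivWithinAt t _ j := by
    rw [phiA, phi_equallySpaced, mul_zero, mul_zero, zero_add]
    have hlin : HasDerivAt (fun s => ρ * s) ρ t := by
      simpa only [mul_one] using (hasDerivAt_id' t).const_mul ρ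
    exact ((hlin.const_add ζ).add_const _).hasDerivWithinAt

lemma IsSpiralFlow.abs_sub_equallySpaced_le (ha : 0 ≤ a) (hθ : IsSpiralFlow a ρ θ) {ζ : ℝ}
    (hζ : ∑ j, equallySpaced n ζ j = ∑ j, θ 0 j) {t : ℝ} (ht : 0 ≤ t) (j : Fin n) :
    |θ t j - ρ * t - equallySpaced n ζ j| ≤
      ‖WithLp.toLp 2 (θ 0 - equallySpaced n ζ)‖ * Real.exp (-(a / 4) * n * t) := by
  have hle := hθ.norm_toLp_sub_le ha (isSpiralFlow_equallySpaced n a ρ ζ)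
    (by simpa only [mul_zero, add_zero] using hζ.symm) ht
  simp only [mul_zero, add_zero] at hle
  calc |θ t j - ρ * t - equallySpaced n ζ j| = |θ t j - equallySpaced n (ζ + ρ * t) j| := by
        unfold equallySpaced
        congr 1
        ring
    _ ≤ ‖WithLp.toLp 2 (θ t - equallySpaced n (ζ + ρ * t))‖ :=
        PiLp.norm_apply_le (WithLp.toLp 2 (θ t - equallySpaced n (ζ + ρ * t))) j
    _ ≤ _ := hle

end SpiralFlow

/-! ### The truncated cotangent and its potential -/

section TruncatedCotangent

variable {η u : ℝ}

/-- The cotangent, frozen outside of `[η, π - η]`. -/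
def truncCot (h : η ≤ π - η) : ℝ → ℝ := IccExtend h ((Icc η (π - η)).domRestrict Real.cot)

lemma truncCot_eq_cot_projIcc (h : η ≤ π - η) (u : ℝ) :
    truncCot h u = Real.cot (projIcc η (π - η) h u) := rfl

lemma truncCot_of_mem (h : η ≤ π - η) (hu : u ∈ Icc η (π - η)) : truncCot h u = Real.cot u :=
  IccExtend_of_mem h _ hu

lemma truncCot_pi_sub (h : η ≤ π - η) (u : ℝ) : truncCot h (π - u) = -truncCot h u := by
  have hproj : (projIcc η (π - η) h (π - u) : ℝ) = π - projIcc η (π - η) h u := by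
    simp only [coe_projIcc]
    grind
  rw [truncCot_eq_cot_projIcc, hproj, cot_pi_sub, truncCot_eq_cot_projIcc]

lemma Icc_subset_Ioo_zero_pi (hη : 0 < η) : Icc η (π - η) ⊆ Ioo 0 π :=
  Icc_subset_Ioo hη (sub_lt_self π hη)

lemma antitone_truncCot (hη : 0 < η) (h : η ≤ π - η) : Antitone (truncCot h) := fun u v huv =>
  antitoneOn_cot (Icc_subset_Ioo_zero_pi hη (projIcc η (π - η) h u).2)
    (Icc_subset_Ioo_zero_pi hη (projIcc η (π - η) h v).2) (monotone_projIcc h huv)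

lemma truncCot_nonneg (hη : 0 < η) (h : η ≤ π - η) (hu : u ≤ π / 2) : 0 ≤ truncCot h u := by
  have hle := antitone_truncCot hη h (by linarith : u ≤ π - u)
  rw [truncCot_pi_sub] at hle
  linarith

lemma abs_truncCot_le (hη : 0 < η) (h : η ≤ π - η) (u : ℝ) : |truncCot h u| ≤ Real.cot η := by
  have hle : ∀ v, truncCot h v ≤ Real.cot η := fun v =>
    antitoneOn_cot (Icc_subset_Ioo_zero_pi hη (left_mem_Icc.2 h))
      (Icc_subset_Ioo_zero_pi hη (projIcc η (π - η) h v).2) (projIcc η (π - η) h v).2.1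
  refine abs_le.2 ⟨?_, hle u⟩
  rw [neg_le, ← truncCot_pi_sub]
  exact hle (π - u)

lemma exists_lipschitzWith_truncCot (hη : 0 < η) (h : η ≤ π - η) :
    ∃ K, LipschitzWith K (truncCot h) := by
  have hderiv : ∀ u ∈ Icc η (π - η),
      HasDerivWithinAt Real.cot (-(1 + Real.cot u ^ 2)) (Icc η (π - η)) u := fun u hu =>
    (hasDerivAt_cot
      (Real.sin_pos_of_mem_Ioo (Icc_subset_Ioo_zero_pi hη hu)).ne').hasDerivWithinAt
  have hbound : ∀ u ∈ Icc η (π - η), ‖-(1 + Real.cot u ^ 2)‖₊ ≤ 1 + ‖Real.cot η‖₊ ^ 2 :=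
    fun u hu => by
      rw [nnnorm_neg]
      refine (nnnorm_add_le _ _).trans ?_
      rw [nnnorm_one, nnnorm_pow]
      gcongr 1 + ?_ ^ 2
      have hle := (abs_truncCot_le hη h u).trans (le_abs_self _)
      rwa [truncCot_of_mem h hu] at hle
  exact ⟨_, ((convex_Icc η (π - η)).lipschitzOnWith_of_nnnorm_hasDerivWithin_le
    hderiv hbound).to_restrict.comp (LipschitzWith.projIcc h)⟩

/-- The potential of the force `truncCot`, vanishing at `π / 2`. -/
def truncPot (h : η ≤ π - η) (u : ℝ) : ℝ := -∫ s in (π / 2)..u, truncCot h s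

lemma hasDerivAt_truncPot (hη : 0 < η) (h : η ≤ π - η) (u : ℝ) :
    HasDerivAt (truncPot h) (-truncCot h u) u :=
  have hcont : Continuous (truncCot h) :=
    (exists_lipschitzWith_truncCot hη h).choose_spec.continuous
  (intervalIntegral.integral_hasDerivAt_right (hcont.intervalIntegrable _ _)
    hcont.aestronglyMeasurable.stronglyMeasurableAtFilter hcont.continuousAt).neg

lemma truncPot_pi_sub (h : η ≤ π - η) (u : ℝ) : truncPot h (π - u) = truncPot h u := by
  have hsymm := intervalIntegral.integral_comp_sub_left (truncCot h) π (a := u) (b := π / 2)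
  simp only [truncCot_pi_sub, intervalIntegral.integral_neg, sub_half] at hsymm
  rw [truncPot, truncPot, ← hsymm, intervalIntegral.integral_symm, neg_neg]

lemma antitoneOn_truncPot (hη : 0 < η) (h : η ≤ π - η) :
    AntitoneOn (truncPot h) (Iic (π / 2)) :=
  antitoneOn_of_hasDerivWithinAt_nonpos (convex_Iic _)
    (fun u _ => (hasDerivAt_truncPot hη h u).continuousAt.continuousWithinAt)
    (fun u _ => (hasDerivAt_truncPot hη h u).hasDerivWithinAt)
    (fun _ hu => neg_nonpos.2 (truncCot_nonneg hη h (mem_Iic.1 (interior_subset hu))))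

lemma truncPot_nonneg (hη : 0 < η) (h : η ≤ π - η) (u : ℝ) : 0 ≤ truncPot h u := by
  have hleft : ∀ v ≤ π / 2, 0 ≤ truncPot h v := fun v hv => by
    have hle := antitoneOn_truncPot hη h hv self_mem_Iic hv
    rwa [truncPot, intervalIntegral.integral_same, neg_zero] at hle
  rcases le_total u (π / 2) with hu | hu
  · exact hleft u hu
  · rw [← truncPot_pi_sub]
    exact hleft _ (by linarith)

lemma mem_Ioo_of_truncPot_lt (hη : 0 < η) (h : η ≤ π - η) (hu : truncPot h u < truncPot h η) :
    u ∈ Ioo η (π - η) := by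
  have hlt : ∀ v, truncPot h v < truncPot h η → η < v := fun v hv => by
    by_contra! hle
    exact hv.not_ge (antitoneOn_truncPot hη h (mem_Iic.2 (by linarith)) (mem_Iic.2 (by linarith))
      hle)
  have hlt' := hlt (π - u) (by rwa [truncPot_pi_sub])
  exact ⟨hlt u hu, by linarith⟩

lemma truncPot_of_mem (hη : 0 < η) (h : η ≤ π - η) (hu : u ∈ Icc η (π - η)) :
    truncPot h u = -Real.log (Real.sin u) := by
  have hmem : π / 2 ∈ Icc η (π - η) := by constructor <;> linarith
  have hderiv : ∀ s ∈ uIcc (π / 2) u,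
      HasDerivAt (fun s => Real.log (Real.sin s)) (truncCot h s) s := fun s hs => by
    have hs' := uIcc_subset_Icc hmem hu hs
    rw [truncCot_of_mem h hs', Real.cot_eq_cos_div_sin]
    exact (Real.hasDerivAt_sin s).log
      (Real.sin_pos_of_mem_Ioo (Icc_subset_Ioo_zero_pi hη hs')).ne'
  rw [truncPot, intervalIntegral.integral_eq_sub_of_hasDerivAt hderiv
    ((antitone_truncCot hη h).intervalIntegrable), Real.sin_pi_div_two, Real.log_one, sub_zero]

end TruncatedCotangent

/-! ### Global existence -/

section GlobalExistence

variable {E : Type*} [NormedAddCommGroup E] [NormedSpace ℝ E] {f : E → E} {K L : NNReal}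

lemma eqOn_Icc_of_isIntegralCurveOn (hK : LipschitzWith K f) {α β : ℝ → E} {t₀ t₁ : ℝ}
    (hα : IsIntegralCurveOn α (fun _ => f) (Icc t₀ t₁))
    (hβ : IsIntegralCurveOn β (fun _ => f) (Icc t₀ t₁)) (h0 : α t₀ = β t₀) :
    EqOn α β (Icc t₀ t₁) :=
  have hright : ∀ {γ : ℝ → E}, IsIntegralCurveOn γ (fun _ => f) (Icc t₀ t₁) →
      ∀ t ∈ Ico t₀ t₁, HasDerivWithinAt γ (f (γ t)) (Ici t) t := fun hγ t ht =>
    (hγ t (Ico_subset_Icc_self ht)).mono_of_mem_nhdsWithin (Icc_mem_nhdsGE_of_mem ht)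
  ODE_solution_unique (fun _ => hK) hα.continuousOn (hright hα) hβ.continuousOn (hright hβ) h0

variable [CompleteSpace E]

lemma exists_isIntegralCurveOn_Icc (hK : LipschitzWith K f) (hL : ∀ x, ‖f x‖ ≤ L) (x₀ : E)
    {T : ℝ} (hT : 0 ≤ T) :
    ∃ α : ℝ → E, α 0 = x₀ ∧ IsIntegralCurveOn α (fun _ => f) (Icc 0 T) := by
  have hf : IsPicardLindelof (fun _ => f) (⟨0, left_mem_Icc.2 hT⟩ : Icc 0 T) x₀
      (L * T.toNNReal) 0 L K := by
    refine IsPicardLindelof.of_time_independent (fun x _ => hL x) hK.lipschitzOnWith ?_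
    simp [hT]
  exact hf.exists_eq_forall_mem_Icc_hasDerivWithinAt₀

lemma exists_isIntegralCurveOn_Ici (hK : LipschitzWith K f) (hL : ∀ x, ‖f x‖ ≤ L) (x₀ : E) :
    ∃ α : ℝ → E, α 0 = x₀ ∧ IsIntegralCurveOn α (fun _ => f) (Ici 0) := by
  choose! α hα0 hα using fun T (hT : 0 ≤ T) => exists_isIntegralCurveOn_Icc hK hL x₀ hT
  have hdiag : ∀ T, EqOn (fun t => α t t) (α T) (Icc 0 T) := fun T t ht =>
    have hT := ht.1.trans ht.2
    eqOn_Icc_of_isIntegralCurveOn hK (hα t ht.1) ((hα T hT).mono (Icc_subset_Icc_right ht.2))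
      ((hα0 t ht.1).trans (hα0 T hT).symm) ⟨ht.1, le_rfl⟩
  refine ⟨fun t => α t t, hα0 0 le_rfl, fun t (ht : 0 ≤ t) => ?_⟩
  have hmem : t ∈ Icc 0 (t + 1) := ⟨ht, by linarith⟩
  have hderiv := (hα (t + 1) (by linarith) t hmem).congr_of_mem (hdiag (t + 1)) hmem
  rw [← hdiag (t + 1) hmem] at hderiv
  refine hderiv.mono_of_mem_nhdsWithin ?_
  rw [← Ici_inter_Iic]
  exact inter_mem_nhdsWithin _ (Iic_mem_nhds (lt_add_one t))

end GlobalExistence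

section PairFieldFlow

variable {n : ℕ} {g : ℝ → ℝ} {c ρ η : ℝ} {K : NNReal} {x : Fin n → ℝ}

lemma norm_pairField_le {M : ℝ} (hg : ∀ u, |g u| ≤ M) (c ρ : ℝ) (x : Fin n → ℝ) :
    ‖pairField g c ρ x‖ ≤ |c| * (n * M) + |ρ| := by
  have hM : 0 ≤ M := (abs_nonneg _).trans (hg 0)
  refine (pi_norm_le_iff_of_nonneg (by positivity)).2 fun j => (norm_add_le _ _).trans ?_
  rw [norm_mul, Real.norm_eq_abs, Real.norm_eq_abs ρ]
  gcongr
  calc ‖pairForce g x j‖ ≤ ∑ _k : Fin n, M := norm_sum_le_of_le _ fun k _ => hg (phase x j k)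
    _ = n * M := by rw [Finset.sum_const, Finset.card_univ, Fintype.card_fin, nsmul_eq_mul]

lemma dist_phase_le (x y : Fin n → ℝ) (j k : Fin n) :
    dist (phase x j k) (phase y j k) ≤ dist x y := by
  rw [Real.dist_eq, phase_sub_phase, abs_div, abs_two, div_le_iff₀ two_pos, mul_two]
  exact (abs_sub _ _).trans (add_le_add (dist_le_pi_dist x y j) (dist_le_pi_dist x y k))

lemma lipschitzWith_pairField (hg : LipschitzWith K g) (c ρ : ℝ) :
    LipschitzWith (‖c‖₊ * (n * K)) (pairField (n := n) g c ρ) := by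
  refine LipschitzWith.of_dist_le_mul fun x y => (dist_pi_le_iff (by positivity)).2 fun j => ?_
  have hforce : dist (pairForce g x j) (pairForce g y j) ≤ n * (K * dist x y) :=
    calc dist (pairForce g x j) (pairForce g y j) ≤ ∑ _k : Fin n, K * dist x y :=
          dist_sum_sum_le_of_le _ fun k _ =>
            (hg.dist_le_mul _ _).trans (by gcongr; exact dist_phase_le x y j k)
      _ = n * (K * dist x y) := by
          rw [Finset.sum_const, Finset.card_univ, Fintype.card_fin, nsmul_eq_mul]
  simp only [pairField, dist_add_right, Real.dist_eq, ← mul_sub, abs_mul]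
  push_cast
  rw [mul_assoc, mul_assoc]
  exact mul_le_mul_of_nonneg_left hforce (abs_nonneg c)

lemma exists_isIntegralCurveOn_pairField_truncCot (hη : 0 < η) (h : η ≤ π - η) (c ρ : ℝ)
    (x₀ : Fin n → ℝ) :
    ∃ θ : ℝ → Fin n → ℝ, θ 0 = x₀ ∧
      IsIntegralCurveOn θ (fun _ => pairField (truncCot h) c ρ) (Ici 0) := by
  obtain ⟨K, hK⟩ := exists_lipschitzWith_truncCot hη h
  exact exists_isIntegralCurveOn_Ici (lipschitzWith_pairField hK c ρ)
    (fun x => (norm_pairField_le (abs_truncCot_le hη h) c ρ x).trans (Real.le_coe_toNNReal _)) x₀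

lemma phase_mem_Ioo_of_isIntegralCurveOn_truncCot (hη : 0 < η) (h : η ≤ π - η) (hc : 0 ≤ c)
    {θ : ℝ → Fin n → ℝ} (hθ : IsIntegralCurveOn θ (fun _ => pairField (truncCot h) c ρ) (Ici 0))
    (henergy : pairEnergy (truncPot h) (θ 0) < truncPot h η) {t : ℝ} (ht : 0 ≤ t) (j k : Fin n) :
    phase (θ t) j k ∈ Ioo η (π - η) :=
  mem_Ioo_of_truncPot_lt hη h <|
    calc truncPot h (phase (θ t) j k) ≤ pairEnergy (truncPot h) (θ t) :=
          le_pairEnergy (truncPot_nonneg hη h) (θ t) j k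
      _ ≤ pairEnergy (truncPot h) (θ 0) :=
          antitoneOn_pairEnergy (truncCot_pi_sub h) (hasDerivAt_truncPot hη h) hc (convex_Ici 0) hθ
            self_mem_Ici ht ht
      _ < truncPot h η := henergy

lemma tendsto_neg_log_sin_nhdsGT_zero :
    Tendsto (fun η => -Real.log (Real.sin η)) (𝓝[>] 0) atTop := by
  have hsin : Tendsto Real.sin (𝓝[>] 0) (𝓝[>] 0) := by
    refine tendsto_nhdsWithin_iff.2 ⟨?_, ?_⟩
    · simpa only [Real.sin_zero] using
        (Real.continuous_sin.tendsto 0).mono_left nhdsWithin_le_nhds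
    · filter_upwards [Ioo_mem_nhdsGT Real.pi_pos] with η hη using Real.sin_pos_of_mem_Ioo hη
  exact tendsto_neg_atBot_atTop.comp (Real.tendsto_log_nhdsGT_zero.comp hsin)

lemma exists_pairEnergy_truncPot_lt (hx : x ∈ Xspace n) :
    ∃ (η : ℝ) (h : η ≤ π - η), 0 < η ∧ pairEnergy (truncPot h) x < truncPot h η := by
  have hhalf : ∀ᶠ η in 𝓝[>] (0 : ℝ), η < π / 2 :=
    eventually_nhdsWithin_of_eventually_nhds (eventually_lt_nhds (by positivity))
  have hphase : ∀ᶠ η in 𝓝[>] (0 : ℝ), ∀ j k, phase x j k ∈ Icc η (π - η) :=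
    eventually_all.2 fun j => eventually_all.2 fun k => by
      have hjk := mem_Xspace_iff_phase.1 hx j k
      filter_upwards [Ioo_mem_nhdsGT hjk.1, Ioo_mem_nhdsGT (sub_pos.2 hjk.2)] with η hη hη'
      exact ⟨hη.2.le, by linarith [hη'.2]⟩
  have henergy := tendsto_neg_log_sin_nhdsGT_zero.eventually_gt_atTop
    (pairEnergy (fun u => -Real.log (Real.sin u)) x)
  obtain ⟨η, hη, hη2, hmem, hlt⟩ :=
    (eventually_mem_nhdsWithin.and (hhalf.and (hphase.and henergy))).exists
  have h : η ≤ π - η := by linarith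
  refine ⟨η, h, hη, ?_⟩
  rw [truncPot_of_mem hη h (left_mem_Icc.2 h)]
  simpa only [pairEnergy, truncPot_of_mem hη h (hmem _ _)] using hlt

lemma exists_isSpiralFlow {a : ℝ} (ha : 0 ≤ a) (ρ : ℝ) (hx : x ∈ Xspace n) :
    ∃ θ : ℝ → Fin n → ℝ, θ 0 = x ∧ IsSpiralFlow a ρ θ := by
  obtain ⟨η, h, hη, henergy⟩ := exists_pairEnergy_truncPot_lt hx
  obtain ⟨θ, rfl, hθ⟩ := exists_isIntegralCurveOn_pairField_truncCot hη h (a / 2) ρ x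
  have hphase : ∀ t ∈ Ici (0 : ℝ), ∀ j k, phase (θ t) j k ∈ Icc η (π - η) := fun t ht j k =>
    Ioo_subset_Icc_self
      (phase_mem_Ioo_of_isIntegralCurveOn_truncCot hη h (by positivity) hθ henergy ht j k)
  refine ⟨θ, rfl, isSpiralFlow_iff.2 ⟨fun t ht j k =>
    Icc_subset_Ioo_zero_pi hη (hphase t ht j k), fun t ht => ?_⟩⟩
  have hfield : pairField (truncCot h) (a / 2) ρ (θ t) = pairField Real.cot (a / 2) ρ (θ t) := by
    funext j
    simp only [pairField, pairForce, truncCot_of_mem h (hphase t ht j _)]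
  simpa only [hfield] using hθ t ht

end PairFieldFlow

/-- For any `θ₀ ∈ 𝒳ₙ`, the spiraling zero-energy flow
`dθ^j/dt = 2 φ_a^j(θ) + ρ` has a unique solution in `𝒳ₙ`, and `θ_t - ρt(1,…,1)`
converges exponentially fast, with rate `(a/4) n`, to an equally spaced configuration
`(ζ, ζ + 2π/n, …, ζ + (n-1)2π/n)`. -/
theorem spiral_zero_energy_flow
    (n : ℕ) (hn : 2 ≤ n) (a ρ : ℝ) (ha : 0 < a)
    (θ₀ : Fin n → ℝ) (h₀ : θ₀ ∈ Xspace n) :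
    ∃ θ : ℝ → Fin n → ℝ,
      (θ 0 = θ₀ ∧ (∀ t ∈ Ici (0 : ℝ), θ t ∈ Xspace n) ∧
        ∀ t ∈ Ici (0 : ℝ), ∀ j : Fin n,
          HasDerivWithinAt (fun s => θ s j) (2 * phiA a (θ t) j + ρ) (Ici 0) t) ∧
      (∀ θ' : ℝ → Fin n → ℝ,
        (θ' 0 = θ₀ ∧ (∀ t ∈ Ici (0 : ℝ), θ' t ∈ Xspace n) ∧
          ∀ t ∈ Ici (0 : ℝ), ∀ j : Fin n,
            HasDerivWithinAt (fun s => θ' s j) (2 * phiA a (θ' t) j + ρ) (Ici 0) t) →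
        ∀ t ∈ Ici (0 : ℝ), θ' t = θ t) ∧
      ∃ ζ C : ℝ, 0 ≤ C ∧
        ∀ t ∈ Ici (0 : ℝ), ∀ j : Fin n,
          |θ t j - ρ * t - (ζ + (j : ℕ) * (2 * π / n))| ≤
            C * Real.exp (-(a / 4) * n * t) := by
  obtain ⟨θ, rfl, hθ⟩ := exists_isSpiralFlow ha.le ρ h₀
  obtain ⟨ζ, hζ⟩ := exists_sum_equallySpaced_eq (by omega : n ≠ 0) (∑ j, θ 0 j)
  refine ⟨θ, ⟨rfl, hθ.mem_Xspace, hθ.hasDerivWithinAt⟩, ?_, ζ,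
    ‖WithLp.toLp 2 (θ 0 - equallySpaced n ζ)‖, norm_nonneg _,
    fun t ht j => hθ.abs_sub_equallySpaced_le ha.le hζ ht j⟩
  rintro θ' ⟨h0, hmem, hderiv⟩ t ht
  exact IsSpiralFlow.eq_of_zero_eq ha.le ⟨hmem, hderiv⟩ hθ h0 ht

end
end

section
/- Finite-energy systems with polynomially slow convergence. Fix ε ∈ (0, π/2) and suppose θ = (θ¹, θ²) : [0,∞) → 𝒳₂ is differentiable with θ¹_0 = 0, θ²_0 = π and satisfies dθ¹_t/dt = 2·cot((θ¹_t − θ²_t)/2) − ε/(t+1) and dθ²_t/dt = 2·cot((θ²_t − θ¹_t)/2) for all t ≥ 0. Then the multiradial Dirichlet energy satisfies J(θ) = ε²/2, and for all t ≥ 0 one has (θ²_t − θ¹_t) − π ≥ ε·(1 − e^{−4t})/(4(t+1)) ≥ 0; in particular d(θ_t) ≥ ε·(1 − e^{−4t})/(4(t+1)), so the convergence to the equally spaced configuration is at most polynomially fast although the energy ε²/2 can be made arbitrarily small. -/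
open MeasureTheory Filter Set
open scoped Real Topology ENNReal Classical

noncomputable section

/-!
A path solving `θ' = 2φ(θ) + u` has energy density `½ ∑ⱼ (uʲ)²`, so its energy is read off
the forcing `u`. For two particles, the excess `x` of the gap over `π` satisfies
`x' = -4 tan (x / 2) + w`, where `w` is the difference of the two forcings. Since `tan (x / 2) ≤ x`
for `0 ≤ x ≤ 2π / 3`, a bound `w ≥ m` on `[0, t]` gives `x t ≥ m (1 - e^{-4t}) / 4` by comparison
with the linear equation `y' = -4y + m`, `y 0 = 0`. Here `w = ε / (s + 1)` is decreasing, so one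
takes `m = ε / (t + 1)`, its final value.
-/

lemma sin_half_sub_ne_zero {n : ℕ} {x : Fin n → ℝ} (hx : x ∈ Xspace n) {j k : Fin n}
    (hjk : j ≠ k) : Real.sin ((x j - x k) / 2) ≠ 0 := by
  have hjk_lt := hx.2 j k
  have hkj_lt := hx.2 k j
  rw [Ne, Real.sin_eq_zero_iff_of_lt_of_lt (by linarith) (by linarith)]
  exact div_ne_zero (sub_ne_zero.2 (hx.1.injective.ne hjk)) two_ne_zero

lemma continuousOn_phi {n : ℕ} (j : Fin n) : ContinuousOn (fun x => phi x j) (Xspace n) := by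
  simp only [phi, Real.cot_eq_cos_div_sin]
  refine continuousOn_finsetSum _ fun k hk => ContinuousOn.div (by fun_prop) (by fun_prop) ?_
  exact fun x hx => sin_half_sub_ne_zero hx (Finset.ne_of_mem_erase hk).symm

lemma absCont_of_hasDerivWithinAt {n : ℕ} {T : ℝ} {θ v : ℝ → Fin n → ℝ}
    (hθ : ∀ j, ContinuousOn (fun s => θ s j) (Icc 0 T))
    (hderiv : ∀ j, ∀ t ∈ Ioo 0 T, HasDerivWithinAt (fun s => θ s j) (v t j) (Ioi t) t)
    (hv : ∀ j, IntegrableOn (fun s => v s j) (Icc 0 T)) : AbsCont T θ := by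
  refine ⟨v, hv, fun t ht j => ?_⟩
  have hsub : Icc 0 t ⊆ Icc 0 T := Icc_subset_Icc_right ht.2
  have hint : IntervalIntegrable (fun s => v s j) volume 0 t :=
    (intervalIntegrable_iff_integrableOn_Icc_of_le ht.1).2 ((hv j).mono_set hsub)
  rw [intervalIntegral.integral_eq_sub_of_hasDeriv_right_of_le ht.1 ((hθ j).mono hsub)
    (fun s hs => hderiv j s ⟨hs.1, hs.2.trans_le ht.2⟩) hint, add_sub_cancel]

lemma iSup_setLIntegral_Ioc {f : ℝ → ℝ≥0∞} {a : ℝ}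
    (hf : AEMeasurable f (volume.restrict (Ioi a))) :
    ⨆ b : ℝ, ∫⁻ s in Ioc a b, f s = ∫⁻ s in Ioi a, f s := by
  rw [← (aecover_Iic tendsto_id).iSup_lintegral_eq_of_countably_generated hf]
  simp only [id, Measure.restrict_restrict measurableSet_Iic, Iic_inter_Ioi]

/-- `θ` solves `θ' = 2φ(θ) + u` on `[0, ∞)`: the flow of zero multiradial energy, pushed by a
forcing `u`. The derivative at the initial time `0` is one-sided. -/
def IsForcedFlow {n : ℕ} (u θ : ℝ → Fin n → ℝ) : Prop :=
  ∀ t ∈ Ici (0 : ℝ), ∀ j, HasDerivWithinAt (fun s => θ s j) (2 * phi (θ t) j + u t j) (Ici 0) t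

namespace IsForcedFlow

section Energy

variable {n : ℕ} {u θ : ℝ → Fin n → ℝ}

lemma continuousOn (h : IsForcedFlow u θ) : ContinuousOn θ (Ici 0) :=
  continuousOn_pi.2 fun j t ht => (h t ht j).continuousWithinAt

lemma deriv_eq (h : IsForcedFlow u θ) {t : ℝ} (ht : 0 < t) (j : Fin n) :
    deriv (fun s => θ s j) t = 2 * phi (θ t) j + u t j :=
  ((h t ht.le j).hasDerivAt (Ici_mem_nhds ht)).deriv

lemma absCont (h : IsForcedFlow u θ) (hX : MapsTo θ (Ici 0) (Xspace n))
    (hu : ContinuousOn u (Ici 0)) (T : ℝ) : AbsCont T θ := by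
  have hθ := h.continuousOn
  have hdrift : ∀ j, ContinuousOn (fun t => 2 * phi (θ t) j + u t j) (Ici 0) := fun j =>
    (((continuousOn_phi j).comp hθ hX).const_mul 2).add (continuousOn_pi.1 hu j)
  exact absCont_of_hasDerivWithinAt
    (fun j => (continuousOn_pi.1 hθ j).mono Icc_subset_Ici_self)
    (fun j t ht => (h t ht.1.le j).mono (Ioi_subset_Ici ht.1.le))
    (fun j => ((hdrift j).mono Icc_subset_Ici_self).integrableOn_Icc)

lemma mEnergy_eq (h : IsForcedFlow u θ) (hX : MapsTo θ (Ici 0) (Xspace n))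
    (hu : ContinuousOn u (Ici 0)) (T : ℝ) :
    mEnergy n T θ =
      ENNReal.ofReal (1 / 2) * ∫⁻ s in Ioc 0 T, ENNReal.ofReal (∑ j, u s j ^ 2) := by
  rw [mEnergy, if_pos (h.absCont hX hu T)]
  congr 1
  refine setLIntegral_congr_fun measurableSet_Ioc fun s hs => ?_
  simp only [h.deriv_eq hs.1, add_sub_cancel_left]

theorem mEnergyInf_eq (h : IsForcedFlow u θ) (hX : MapsTo θ (Ici 0) (Xspace n))
    (hu : ContinuousOn u (Ici 0)) :
    mEnergyInf n θ =
      ENNReal.ofReal (1 / 2) * ∫⁻ s in Ioi 0, ENNReal.ofReal (∑ j, u s j ^ 2) := by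
  have hcont : ContinuousOn (fun s => ∑ j, u s j ^ 2) (Ioi 0) :=
    continuousOn_finsetSum _ fun j _ =>
      ((continuousOn_pi.1 hu j).mono Ioi_subset_Ici_self).pow 2
  simp only [mEnergyInf, h.mEnergy_eq hX hu]
  rw [← ENNReal.mul_iSup,
    iSup_setLIntegral_Ioc (hcont.aemeasurable measurableSet_Ioi).ennreal_ofReal]

end Energy

end IsForcedFlow

lemma tan_le_two_mul {z : ℝ} (h0 : 0 ≤ z) (h1 : z ≤ π / 3) : Real.tan z ≤ 2 * z := by
  have hcos : 1 / 2 ≤ Real.cos z := by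
    rw [← Real.cos_pi_div_three]
    exact Real.cos_le_cos_of_nonneg_of_le_pi h0 (by linarith [Real.pi_pos]) h1
  rw [Real.tan_eq_sin_div_cos, div_le_iff₀ (by linarith)]
  calc Real.sin z ≤ z := Real.sin_le h0
    _ = 2 * z * (1 / 2) := by ring
    _ ≤ 2 * z * Real.cos z := by gcongr

lemma hasDerivAt_const_mul_one_sub_exp (a k t : ℝ) :
    HasDerivAt (fun s => a * (1 - Real.exp (-k * s)))
      (k * (a - a * (1 - Real.exp (-k * t)))) t := by
  refine ((((hasDerivAt_id t).const_mul (-k)).exp.const_sub 1).const_mul a).congr_deriv ?_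
  simp only [id]
  ring

/-- The differential inequality is only needed in `[0, a)`, where the comparison solution lives. -/
theorem mul_one_sub_exp_le_of_deriv_right_ge {k a t : ℝ} (hk : 0 < k) (ha : 0 < a) (ht : 0 ≤ t)
    {x x' : ℝ → ℝ} (hx0 : 0 ≤ x 0) (hx : ContinuousOn x (Icc 0 t))
    (hx' : ∀ s ∈ Ico 0 t, HasDerivWithinAt x (x' s) (Ici s) s)
    (hge : ∀ s ∈ Ico 0 t, x s ∈ Ico 0 a → k * (a - x s) ≤ x' s) :
    a * (1 - Real.exp (-k * t)) ≤ x t := by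
  -- Lowering `a` to `b < a` makes the differential inequality strict along the barrier.
  have hlower : ∀ b ∈ Ioo 0 a, b * (1 - Real.exp (-k * t)) ≤ x t := fun b hb => by
    refine image_le_of_deriv_right_lt_deriv_boundary' (a := 0) (b := t)
      (fun s _ => (hasDerivAt_const_mul_one_sub_exp b k s).continuousAt.continuousWithinAt)
      (fun s _ => (hasDerivAt_const_mul_one_sub_exp b k s).hasDerivWithinAt)
      (by simpa using hx0) hx hx' (fun s hs hxs => ?_) (right_mem_Icc.2 ht)
    have hexp_pos := Real.exp_pos (-k * s)
    have hexp_le : Real.exp (-k * s) ≤ 1 := Real.exp_le_one_iff.2 (by nlinarith [hs.1])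
    have hmem : x s ∈ Ico 0 a := by
      rw [← hxs]
      exact ⟨mul_nonneg hb.1.le (by linarith),
        (mul_le_of_le_one_right hb.1.le (by linarith)).trans_lt hb.2⟩
    calc k * (b - b * (1 - Real.exp (-k * s))) < k * (a - x s) := by
          rw [hxs]
          gcongr
          exact hb.2
      _ ≤ x' s := hge s hs hmem
  have hlim : Tendsto (fun b => b * (1 - Real.exp (-k * t))) (𝓝[<] a)
      (𝓝 (a * (1 - Real.exp (-k * t)))) :=
    ((continuous_mul_const _).tendsto a).mono_left nhdsWithin_le_nhds
  exact le_of_tendsto hlim (eventually_of_mem (Ioo_mem_nhdsLT ha) hlower)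

lemma phi_two_zero (x : Fin 2 → ℝ) : phi x 0 = Real.cot ((x 0 - x 1) / 2) := by
  simp [phi, show (Finset.univ.erase 0 : Finset (Fin 2)) = {1} by decide]

lemma phi_two_one (x : Fin 2 → ℝ) : phi x 1 = Real.cot ((x 1 - x 0) / 2) := by
  simp [phi, show (Finset.univ.erase 1 : Finset (Fin 2)) = {0} by decide]

lemma phi_two_one_sub_phi_two_zero (x : Fin 2 → ℝ) :
    phi x 1 - phi x 0 = -2 * Real.tan ((x 1 - x 0 - π) / 2) := by
  rw [phi_two_one, phi_two_zero,
    show (x 1 - x 0) / 2 = (x 1 - x 0 - π) / 2 + π / 2 by ring,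
    show (x 0 - x 1) / 2 = -((x 1 - x 0 - π) / 2 + π / 2) by ring]
  simp only [Real.cot_eq_cos_div_sin, Real.cos_neg, Real.sin_neg, Real.cos_add_pi_div_two,
    Real.sin_add_pi_div_two, Real.tan_eq_sin_div_cos]
  ring

/-- The bound `8π / 3` on `m` keeps the barrier, which stays below `m / 4`, in the range
`[0, 2π / 3]` where `tan (x / 2) ≤ x`. -/
theorem IsForcedFlow.le_excess_gap {u θ : ℝ → Fin 2 → ℝ} (h : IsForcedFlow u θ)
    (h0 : π ≤ θ 0 1 - θ 0 0) {m t : ℝ} (hm : 0 < m) (hm' : m ≤ 8 * π / 3) (ht : 0 ≤ t)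
    (hu : ∀ s ∈ Ico 0 t, m ≤ u s 1 - u s 0) :
    m / 4 * (1 - Real.exp (-4 * t)) ≤ θ t 1 - θ t 0 - π := by
  have hderiv : ∀ s ∈ Ici (0 : ℝ), HasDerivWithinAt (fun s => θ s 1 - θ s 0 - π)
      (-4 * Real.tan ((θ s 1 - θ s 0 - π) / 2) + (u s 1 - u s 0)) (Ici 0) s := fun s hs =>
    (((h s hs 1).sub (h s hs 0)).sub_const π).congr_deriv
      (by linear_combination 2 * phi_two_one_sub_phi_two_zero (θ s))
  refine mul_one_sub_exp_le_of_deriv_right_ge (x := fun s => θ s 1 - θ s 0 - π) four_pos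
    (by positivity) ht (sub_nonneg.2 h0)
    (fun s hs => (hderiv s hs.1).continuousWithinAt.mono Icc_subset_Ici_self)
    (fun s hs => (hderiv s hs.1).mono (Ici_subset_Ici.2 hs.1)) fun s hs hmem => ?_
  have htan := tan_le_two_mul (z := (θ s 1 - θ s 0 - π) / 2)
    (by linarith [hmem.1]) (by linarith [hmem.2])
  linarith [hu s hs]

lemma abs_sub_gap_le_dGap {n : ℕ} (x : Fin n → ℝ) (j : Fin n) :
    |2 * π / n - gap x j| ≤ dGap x :=
  le_ciSup (f := fun j => |2 * π / n - gap x j|) (finite_range _).bddAbove j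

lemma sub_sub_pi_le_dGap (x : Fin 2 → ℝ) : x 1 - x 0 - π ≤ dGap x := by
  have hgap : 2 * π / (2 : ℕ) - gap x 0 = -(x 1 - x 0 - π) := by
    simp [gap, nextVal]
  calc x 1 - x 0 - π ≤ |x 1 - x 0 - π| := le_abs_self _
    _ = |2 * π / (2 : ℕ) - gap x 0| := by rw [hgap, abs_neg]
    _ ≤ dGap x := abs_sub_gap_le_dGap x 0

lemma lintegral_Ioi_sq_div_add_one (ε : ℝ) :
    ∫⁻ s in Ioi (0 : ℝ), ENNReal.ofReal ((ε / (s + 1)) ^ 2) = ENNReal.ofReal (ε ^ 2) := by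
  have hderiv : ∀ s ∈ Ici (0 : ℝ),
      HasDerivAt (fun s => -ε ^ 2 * (s + 1)⁻¹) ((ε / (s + 1)) ^ 2) s := fun s hs => by
    have hne : s + 1 ≠ 0 := by linarith [mem_Ici.1 hs]
    refine ((((hasDerivAt_id s).add_const 1).inv hne).const_mul (-ε ^ 2)).congr_deriv ?_
    simp only [id]
    field_simp
  have hnonneg : ∀ s ∈ Ioi (0 : ℝ), 0 ≤ (ε / (s + 1)) ^ 2 := fun s _ => sq_nonneg _
  have hlim : Tendsto (fun s : ℝ => -ε ^ 2 * (s + 1)⁻¹) atTop (𝓝 (-ε ^ 2 * 0)) :=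
    (tendsto_inv_atTop_zero.comp (tendsto_atTop_add_const_right _ 1 tendsto_id)).const_mul _
  rw [← ofReal_integral_eq_lintegral_ofReal (integrableOn_Ioi_deriv_of_nonneg' hderiv hnonneg hlim)
    (ae_of_all _ fun s => sq_nonneg _),
    integral_Ioi_of_hasDerivAt_of_nonneg' hderiv hnonneg hlim]
  simp

/-- The forcing `(-ε / (t + 1), 0)` of the example: square integrable, but decaying only
polynomially. -/
def slowForcing (ε t : ℝ) : Fin 2 → ℝ := ![-(ε / (t + 1)), 0]

lemma continuousOn_slowForcing (ε : ℝ) : ContinuousOn (slowForcing ε) (Ici 0) := by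
  have hne : ∀ t ∈ Ici (0 : ℝ), t + 1 ≠ 0 := fun t ht => by linarith [mem_Ici.1 ht]
  exact continuousOn_pi.2 <| Fin.forall_fin_two.2
    ⟨(continuousOn_const.div (by fun_prop) hne).neg, continuousOn_const⟩

lemma slowForcing_one_sub_slowForcing_zero (ε t : ℝ) :
    slowForcing ε t 1 - slowForcing ε t 0 = ε / (t + 1) := by
  simp [slowForcing]

lemma sum_slowForcing_sq (ε t : ℝ) : ∑ j, slowForcing ε t j ^ 2 = (ε / (t + 1)) ^ 2 := by
  simp [slowForcing]

lemma isForcedFlow_slowForcing_iff {ε : ℝ} {θ : ℝ → Fin 2 → ℝ} :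
    IsForcedFlow (slowForcing ε) θ ↔
      (∀ t ∈ Ici (0 : ℝ), HasDerivWithinAt (fun s => θ s 0)
        (2 * Real.cot ((θ t 0 - θ t 1) / 2) - ε / (t + 1)) (Ici 0) t) ∧
      (∀ t ∈ Ici (0 : ℝ), HasDerivWithinAt (fun s => θ s 1)
        (2 * Real.cot ((θ t 1 - θ t 0) / 2)) (Ici 0) t) := by
  simp [IsForcedFlow, slowForcing, Fin.forall_fin_two, phi_two_zero, phi_two_one, sub_eq_add_neg,
    forall_and]

namespace IsForcedFlow

section SlowForcing

variable {ε : ℝ} {θ : ℝ → Fin 2 → ℝ}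

lemma mEnergyInf_slowForcing (h : IsForcedFlow (slowForcing ε) θ)
    (hX : MapsTo θ (Ici 0) (Xspace 2)) : mEnergyInf 2 θ = ENNReal.ofReal (ε ^ 2 / 2) := by
  simp only [h.mEnergyInf_eq hX (continuousOn_slowForcing ε), sum_slowForcing_sq]
  rw [lintegral_Ioi_sq_div_add_one, ← ENNReal.ofReal_mul (by norm_num), one_div_mul_eq_div]

lemma le_excess_gap_slowForcing (h : IsForcedFlow (slowForcing ε) θ) (hε : 0 < ε)
    (hε' : ε ≤ 8 * π / 3) (h0 : π ≤ θ 0 1 - θ 0 0) {t : ℝ} (ht : 0 ≤ t) :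
    ε * (1 - Real.exp (-4 * t)) / (4 * (t + 1)) ≤ θ t 1 - θ t 0 - π := by
  have hforcing : ∀ s ∈ Ico 0 t, ε / (t + 1) ≤ slowForcing ε s 1 - slowForcing ε s 0 :=
    fun s hs => by
      have hs0 : 0 ≤ s := hs.1
      rw [slowForcing_one_sub_slowForcing_zero]
      gcongr
      exact hs.2.le
  have hle : ε / (t + 1) ≤ 8 * π / 3 := (div_le_self hε.le (by linarith)).trans hε'
  calc ε * (1 - Real.exp (-4 * t)) / (4 * (t + 1))
      = ε / (t + 1) / 4 * (1 - Real.exp (-4 * t)) := by field_simp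
    _ ≤ θ t 1 - θ t 0 - π := h.le_excess_gap h0 (by positivity) hle ht hforcing

end SlowForcing

end IsForcedFlow

theorem finite_energy_slow_convergence_example_general
    {ε : ℝ} (hε : 0 < ε) (hε' : ε ≤ 8 * π / 3)
    {θ : ℝ → Fin 2 → ℝ}
    (hX : ∀ t ∈ Ici (0 : ℝ), θ t ∈ Xspace 2)
    (h0 : π ≤ θ 0 1 - θ 0 0)
    (hode0 : ∀ t ∈ Ici (0 : ℝ),
      HasDerivWithinAt (fun s => θ s 0)
        (2 * Real.cot ((θ t 0 - θ t 1) / 2) - ε / (t + 1)) (Ici 0) t)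
    (hode1 : ∀ t ∈ Ici (0 : ℝ),
      HasDerivWithinAt (fun s => θ s 1)
        (2 * Real.cot ((θ t 1 - θ t 0) / 2)) (Ici 0) t) :
    mEnergyInf 2 θ = ENNReal.ofReal (ε ^ 2 / 2) ∧
    ∀ t ∈ Ici (0 : ℝ),
      ε * (1 - Real.exp (-4 * t)) / (4 * (t + 1)) ≤ (θ t 1 - θ t 0) - π ∧
      0 ≤ ε * (1 - Real.exp (-4 * t)) / (4 * (t + 1)) ∧
      ε * (1 - Real.exp (-4 * t)) / (4 * (t + 1)) ≤ dGap (θ t) := by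
  have hflow := isForcedFlow_slowForcing_iff.2 ⟨hode0, hode1⟩
  refine ⟨hflow.mEnergyInf_slowForcing hX, fun t (ht : 0 ≤ t) => ?_⟩
  have hgap := hflow.le_excess_gap_slowForcing hε hε' h0 ht
  have hexp : 0 ≤ 1 - Real.exp (-4 * t) := sub_nonneg.2 (Real.exp_le_one_iff.2 (by linarith))
  exact ⟨hgap, by positivity, hgap.trans (sub_sub_pi_le_dGap (θ t))⟩

/-- A two-particle finite-energy system with arbitrarily small energy
`ε²/2` whose convergence to the equally spaced configuration is only polynomially
fast. -/
theorem finite_energy_slow_convergence_example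
    (ε : ℝ) (hε : ε ∈ Ioo (0 : ℝ) (π / 2))
    (θ : ℝ → Fin 2 → ℝ)
    (hX : ∀ t ∈ Ici (0 : ℝ), θ t ∈ Xspace 2)
    (h00 : θ 0 0 = 0) (h01 : θ 0 1 = π)
    (hode0 : ∀ t ∈ Ici (0 : ℝ),
      HasDerivWithinAt (fun s => θ s 0)
        (2 * Real.cot ((θ t 0 - θ t 1) / 2) - ε / (t + 1)) (Ici 0) t)
    (hode1 : ∀ t ∈ Ici (0 : ℝ),
      HasDerivWithinAt (fun s => θ s 1)
        (2 * Real.cot ((θ t 1 - θ t 0) / 2)) (Ici 0) t) :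
    mEnergyInf 2 θ = ENNReal.ofReal (ε ^ 2 / 2) ∧
    ∀ t ∈ Ici (0 : ℝ),
      ε * (1 - Real.exp (-4 * t)) / (4 * (t + 1)) ≤ (θ t 1 - θ t 0) - π ∧
      0 ≤ ε * (1 - Real.exp (-4 * t)) / (4 * (t + 1)) ∧
      ε * (1 - Real.exp (-4 * t)) / (4 * (t + 1)) ≤ dGap (θ t) :=
  finite_energy_slow_convergence_example_general hε.1 (by linarith [hε.2, Real.pi_pos]) hX
    (by rw [h00, h01, sub_zero]) hode0 hode1

end
end
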